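/- arXiv:0804.1522 — 6 statements merged into one kernel-verified Lean document; each statement's English description precedes it below -/
import Mathlib

section
/- Let R be a commutative local Artinian ring with residue field k, and let M be a finitely generated R-module. Then the length of M as an R-module satisfies length_R(M) ≤ length_R(R) · dim_k(M ⊗_R k), where M ⊗_R k = M/𝔪M and 𝔪 is the maximal ideal of R. Moreover, equality holds if and only if M is a free R-module. -/
/-!
Over any ring, a finitely generated module `M` with minimal number of generators `n` is a quotient
of `Rⁿ`, so additivity of length gives `length M ≤ n • length R`. If equality holds and `M` has
finite length, then so does `Rⁿ`, and a proper quotient of `Rⁿ` would be strictly shorter; hence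
`Rⁿ ≃ M`. Over a local ring `n` is `dim_k (k ⊗ M)` by Nakayama's lemma.
-/

open TensorProduct

/-- The length of an `R`-module `M`, defined as the Krull dimension of its lattice of
submodules (for modules of finite length this is the common length of all composition
series). -/
noncomputable def moduleLength (R M : Type*) [Ring R] [AddCommGroup M] [Module R M] :
    WithBot ℕ∞ :=
  Order.krullDim (Submodule R M)

section MinimalGenerators

variable {R M N : Type*} [Ring R] [AddCommGroup M] [Module R M] [AddCommGroup N] [Module R N]

theorem injective_of_surjective_of_length_le [IsArtinian R M] [IsNoetherian R M]
    {f : M →ₗ[R] N} (hf : Function.Surjective f) (h : Module.length R M ≤ Module.length R N) :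
    Function.Injective f := by
  by_contra hinj
  have hlt : Module.length R (M ⧸ LinearMap.ker f) < Module.length R M :=
    Submodule.length_quotient_lt _ (mt LinearMap.ker_eq_bot.mp hinj)
  rw [(f.quotKerEquivOfSurjective hf).length_eq] at hlt
  exact hlt.not_ge h

theorem length_fin_fun (n : ℕ) : Module.length R (Fin n → M) = n • Module.length R M := by
  rw [Module.length_pi, ENat.card_eq_coe_fintype_card, Fintype.card_fin, nsmul_eq_mul]

variable (R M) in
theorem exists_surjective_fin_spanFinrank [Module.Finite R M] :
    ∃ f : (Fin (⊤ : Submodule R M).spanFinrank → R) →ₗ[R] M, Function.Surjective f := by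
  obtain ⟨s, hcard, hspan⟩ :=
    (Module.Finite.fg_top (R := R) (M := M)).exists_span_finset_card_eq_spanFinrank
  let v : Fin (⊤ : Submodule R M).spanFinrank → M := Subtype.val ∘ (s.equivFinOfCardEq hcard).symm
  refine ⟨Fintype.linearCombination R v, ?_⟩
  rw [← LinearMap.range_eq_top, Fintype.range_linearCombination, (Equiv.surjective _).range_comp,
    Subtype.range_coe, hspan]

variable (R M) in
theorem length_le_spanFinrank_nsmul_length [Module.Finite R M] :
    Module.length R M ≤ (⊤ : Submodule R M).spanFinrank • Module.length R R := by
  obtain ⟨f, hf⟩ := exists_surjective_fin_spanFinrank R M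
  exact (Module.length_le_of_surjective f hf).trans_eq (length_fin_fun _)

theorem free_of_length_eq_spanFinrank_nsmul_length [IsArtinian R M] [IsNoetherian R M]
    (h : Module.length R M = (⊤ : Submodule R M).spanFinrank • Module.length R R) :
    Module.Free R M := by
  obtain ⟨f, hf⟩ := exists_surjective_fin_spanFinrank R M
  rw [← length_fin_fun] at h
  obtain ⟨_, _⟩ := isFiniteLength_iff_isNoetherian_isArtinian.mp <|
    Module.length_ne_top_iff.mp (h ▸ Module.length_ne_top)
  exact .of_equiv <| .ofBijective f ⟨injective_of_surjective_of_length_le hf h.ge, hf⟩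

variable (R M) in
theorem length_eq_spanFinrank_nsmul_length_of_free [StrongRankCondition R] [Module.Finite R M]
    [Module.Free R M] :
    Module.length R M = (⊤ : Submodule R M).spanFinrank • Module.length R R := by
  rw [Module.length_of_free_of_finite, Module.finrank_eq_spanFinrank_of_free, nsmul_eq_mul]

end MinimalGenerators

theorem finrank_residueField_tensorProduct_eq_spanFinrank
    (R M : Type*) [CommRing R] [IsLocalRing R] [AddCommGroup M] [Module R M] [Module.Finite R M] :
    Module.finrank (IsLocalRing.ResidueField R) (IsLocalRing.ResidueField R ⊗[R] M) =
      (⊤ : Submodule R M).spanFinrank := by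
  rw [← spanFinrank_top_eq_of_residueField ⊤ Module.Finite.fg_top,
    ← Module.finrank_eq_spanFinrank_of_free]
  exact (Submodule.topEquiv.baseChange R (IsLocalRing.ResidueField R) _ _).finrank_eq.symm

theorem moduleLength_eq_coe_length (R M : Type*) [Ring R] [AddCommGroup M] [Module R M] :
    moduleLength R M = Module.length R M :=
  (Module.coe_length R M).symm

theorem length_le_length_smul_finrank_and_eq_iff_free_general
    (R : Type*) [CommRing R] [IsLocalRing R]
    (M : Type*) [AddCommGroup M] [Module R M] [Module.Finite R M] [IsArtinian R M] :
    moduleLength R M ≤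
      Module.finrank (IsLocalRing.ResidueField R)
        (IsLocalRing.ResidueField R ⊗[R] M) • moduleLength R R ∧
    (moduleLength R M =
      Module.finrank (IsLocalRing.ResidueField R)
        (IsLocalRing.ResidueField R ⊗[R] M) • moduleLength R R ↔
      Module.Free R M) := by
  have : IsNoetherian R M := isNoetherian_of_finite_isArtinian M
  rw [finrank_residueField_tensorProduct_eq_spanFinrank, moduleLength_eq_coe_length,
    moduleLength_eq_coe_length, ← WithBot.coe_nsmul, WithBot.coe_le_coe, WithBot.coe_inj]
  exact ⟨length_le_spanFinrank_nsmul_length R M, free_of_length_eq_spanFinrank_nsmul_length,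
    fun _ ↦ length_eq_spanFinrank_nsmul_length_of_free R M⟩

/-- Let `R` be a commutative local Artinian ring with residue field `k`, and let `M` be a
finitely generated `R`-module.  Then
`length_R M ≤ length_R R * dim_k (k ⊗_R M)`, and equality holds if and only if `M` is a
free `R`-module. -/
theorem length_le_length_smul_finrank_and_eq_iff_free
    (R : Type*) [CommRing R] [IsLocalRing R] [IsArtinianRing R]
    (M : Type*) [AddCommGroup M] [Module R M] [Module.Finite R M] :
    moduleLength R M ≤
      Module.finrank (IsLocalRing.ResidueField R)
        (IsLocalRing.ResidueField R ⊗[R] M) • moduleLength R R ∧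
    (moduleLength R M =
      Module.finrank (IsLocalRing.ResidueField R)
        (IsLocalRing.ResidueField R ⊗[R] M) • moduleLength R R ↔
      Module.Free R M) :=
  length_le_length_smul_finrank_and_eq_iff_free_general R M
end

section
/- Let R be a commutative local Artinian ring with residue field k, let M and N be free R-modules of the same finite rank h, and let φ : M → N and ψ : N → M be R-linear maps such that the image of ψ equals the kernel of φ and the image of φ equals the kernel of ψ. Set d = dim_k((coker φ) ⊗_R k) and d' = dim_k((coker ψ) ⊗_R k), and assume d + d' = h. Then coker φ and coker ψ are free R-modules, of ranks d and d' respectively. -/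
open TensorProduct

/-!
Since `φ ∘ ψ = 0`, the map `φ` induces a right exact sequence `coker ψ → N → coker φ → 0`.
Tensoring it with `k` gives a right exact sequence of vector spaces whose middle term has
dimension `h = d' + d`, so `k ⊗ coker ψ → k ⊗ N` is injective. By the local criterion,
`coker ψ → N` is then a split injection into a free module with free cokernel; its source is
projective, hence free.
-/

theorem injective_of_exact_of_finrank_add_finrank_eq {K U V W : Type*} [DivisionRing K]
    [AddCommGroup U] [Module K U] [FiniteDimensional K U]
    [AddCommGroup V] [Module K V] [FiniteDimensional K V] [AddCommGroup W] [Module K W]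
    {f : U →ₗ[K] V} {g : V →ₗ[K] W} (hfg : Function.Exact f g) (hg : Function.Surjective g)
    (hrank : Module.finrank K U + Module.finrank K W = Module.finrank K V) :
    Function.Injective f := by
  have hf_nullity := f.finrank_range_add_finrank_ker
  have hg_nullity := g.finrank_range_add_finrank_ker
  rw [LinearMap.range_eq_top.2 hg, finrank_top, hfg.linearMap_ker_eq] at hg_nullity
  rw [← LinearMap.ker_eq_bot, ← Submodule.finrank_eq_zero (R := K)]
  lia

section LocalRing

open IsLocalRing

variable {R A N C : Type*} [CommRing R] [IsLocalRing R] [AddCommGroup A] [Module R A]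
  [Module.Finite R A] [AddCommGroup N] [Module R N] [Module.Finite R N] [Module.Free R N]
  [AddCommGroup C] [Module R C]

theorem lTensor_residueField_injective_of_exact_of_finrank_add_finrank_eq
    {i : A →ₗ[R] N} {p : N →ₗ[R] C} (hip : Function.Exact i p) (hp : Function.Surjective p)
    (hrank : Module.finrank (ResidueField R) (ResidueField R ⊗[R] A) +
      Module.finrank (ResidueField R) (ResidueField R ⊗[R] C) = Module.finrank R N) :
    Function.Injective (i.lTensor (ResidueField R)) :=
  injective_of_exact_of_finrank_add_finrank_eq
    (f := i.baseChange (ResidueField R)) (g := p.baseChange (ResidueField R))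
    (lTensor_exact (ResidueField R) hip hp) (p.lTensor_surjective (ResidueField R) hp)
    (hrank.trans Module.finrank_baseChange.symm)

theorem free_domain_of_lTensor_residueField_injective (i : A →ₗ[R] N)
    (hi : Function.Injective (i.lTensor (ResidueField R))) : Module.Free R A := by
  obtain ⟨r, hr⟩ := (split_injective_iff_lTensor_residueField_injective i).2 hi
  have : Module.Projective R A := .of_split i r hr
  exact Module.free_of_flat_of_isLocalRing

theorem free_and_free_of_exact_of_finrank_add_finrank_eq
    {i : A →ₗ[R] N} {p : N →ₗ[R] C} (hip : Function.Exact i p) (hp : Function.Surjective p)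
    (hrank : Module.finrank (ResidueField R) (ResidueField R ⊗[R] A) +
      Module.finrank (ResidueField R) (ResidueField R ⊗[R] C) = Module.finrank R N) :
    Module.Free R A ∧ Module.Free R C :=
  have hi := lTensor_residueField_injective_of_exact_of_finrank_add_finrank_eq hip hp hrank
  ⟨free_domain_of_lTensor_residueField_injective i hi,
    Module.free_of_lTensor_residueField_injective i p hp hip hi⟩

end LocalRing

theorem exact_liftQ_mkQ_range {R M N : Type*} [Ring R] [AddCommGroup M] [Module R M]
    [AddCommGroup N] [Module R N] {Q : Submodule R M} {φ : M →ₗ[R] N}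
    (hQ : Q ≤ LinearMap.ker φ) : Function.Exact (Q.liftQ φ hQ) (LinearMap.range φ).mkQ := by
  rw [LinearMap.exact_iff, Submodule.ker_mkQ, Submodule.range_liftQ]

theorem coker_free_of_periodic_complex_general {R L M N : Type*} [CommRing R] [IsLocalRing R]
    [AddCommGroup L] [Module R L] [AddCommGroup M] [Module R M] [Module.Finite R M]
    [AddCommGroup N] [Module R N] [Module.Free R N] [Module.Finite R N]
    {ψ : L →ₗ[R] M} {φ : M →ₗ[R] N} (hψφ : LinearMap.range ψ ≤ LinearMap.ker φ)
    (hrank : Module.finrank (IsLocalRing.ResidueField R)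
        (IsLocalRing.ResidueField R ⊗[R] (N ⧸ LinearMap.range φ)) +
      Module.finrank (IsLocalRing.ResidueField R)
        (IsLocalRing.ResidueField R ⊗[R] (M ⧸ LinearMap.range ψ)) = Module.finrank R N) :
    (Module.Free R (N ⧸ LinearMap.range φ) ∧
        Module.finrank R (N ⧸ LinearMap.range φ) =
          Module.finrank (IsLocalRing.ResidueField R)
            (IsLocalRing.ResidueField R ⊗[R] (N ⧸ LinearMap.range φ))) ∧
    (Module.Free R (M ⧸ LinearMap.range ψ) ∧
        Module.finrank R (M ⧸ LinearMap.range ψ) =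
          Module.finrank (IsLocalRing.ResidueField R)
            (IsLocalRing.ResidueField R ⊗[R] (M ⧸ LinearMap.range ψ))) := by
  obtain ⟨hcokerψ, hcokerφ⟩ := free_and_free_of_exact_of_finrank_add_finrank_eq
    (exact_liftQ_mkQ_range hψφ) (Submodule.mkQ_surjective _) ((add_comm _ _).trans hrank)
  exact ⟨⟨hcokerφ, Module.finrank_baseChange.symm⟩, ⟨hcokerψ, Module.finrank_baseChange.symm⟩⟩

/-- Let `R` be a commutative local Artinian ring with residue field `k`, let `M`, `N` be
free `R`-modules of the same finite rank `h`, and let `φ : M → N`, `ψ : N → M` be `R`-linear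
maps with `im ψ = ker φ` and `im φ = ker ψ`.  If `d = dim_k ((coker φ) ⊗_R k)` and
`d' = dim_k ((coker ψ) ⊗_R k)` satisfy `d + d' = h`, then `coker φ` and `coker ψ` are free
`R`-modules of ranks `d` and `d'` respectively. -/
theorem coker_free_of_periodic_complex
    (R : Type*) [CommRing R] [IsLocalRing R] [IsArtinianRing R]
    (M N : Type*) [AddCommGroup M] [Module R M] [AddCommGroup N] [Module R N]
    [Module.Free R M] [Module.Finite R M] [Module.Free R N] [Module.Finite R N]
    (h : ℕ) (hM : Module.finrank R M = h) (hN : Module.finrank R N = h)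
    (φ : M →ₗ[R] N) (ψ : N →ₗ[R] M)
    (h1 : LinearMap.range ψ = LinearMap.ker φ)
    (h2 : LinearMap.range φ = LinearMap.ker ψ)
    (d d' : ℕ)
    (hd : Module.finrank (IsLocalRing.ResidueField R)
      (IsLocalRing.ResidueField R ⊗[R] (N ⧸ LinearMap.range φ)) = d)
    (hd' : Module.finrank (IsLocalRing.ResidueField R)
      (IsLocalRing.ResidueField R ⊗[R] (M ⧸ LinearMap.range ψ)) = d')
    (hdd' : d + d' = h) :
    (Module.Free R (N ⧸ LinearMap.range φ) ∧
        Module.finrank R (N ⧸ LinearMap.range φ) = d) ∧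
    (Module.Free R (M ⧸ LinearMap.range ψ) ∧
        Module.finrank R (M ⧸ LinearMap.range ψ) = d') := by
  subst hd hd'
  exact coker_free_of_periodic_complex_general h1.le (hdd'.trans hN.symm)
end

section
/- For every integer l ≥ 1, the number a_l of tuples (x_1,…,x_l) ∈ K^l with 1 + x_1^{p+1} + ⋯ + x_l^{p+1} = 0 equals p^{2l−1} + (−1)^{l−1} p^{l−1}; that is, a_l = p^{2l−1} + p^{l−1} if l is odd, and a_l = p^{2l−1} − p^{l−1} if l is even. -/
/-!
The power map `x ↦ x ^ (q + 1)` on a field with `q ^ 2` elements is the norm to the subfield `F`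
with `q` elements. It vanishes only at `0` and is a surjective homomorphism on units, so its fibres
over nonzero elements all have `q + 1` elements: as a function on `F`, the fibre size is the
constant `q + 1` plus `-q` times the indicator of `0`. A function of the form `m + e • δ₀` stays of
this form under convolution powers, with `δ₀`-coefficient `e ^ l` after `l` factors, and its total
mass then determines the constant. The number of tuples is the value of the `l`-th power at `-1`.
-/

/-- `fermatAffineCount p K l` is the number `a_l` of tuples `(x_1, …, x_l) ∈ K^l`
with `1 + x_1^{p+1} + ⋯ + x_l^{p+1} = 0`. -/
noncomputable def fermatAffineCount (p : ℕ) (K : Type*) [Field K] (l : ℕ) : ℕ :=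
  Nat.card {x : Fin l → K // 1 + ∑ i, x i ^ (p + 1) = 0}

open Finset

section FibreCounts

variable {α A : Type*} [Fintype α] [DecidableEq A]

lemma card_filter_sum_succ_eq [AddCommGroup A] (f : α → A) (n : ℕ) (c : A) :
    #{x : Fin (n + 1) → α | ∑ i, f (x i) = c} =
      ∑ y, #{x : Fin n → α | ∑ i, f (x i) = c - f y} := by
  simp only [card_filter]
  rw [← (Fin.consEquiv fun _ ↦ α).sum_comp, Fintype.sum_prod_type]
  simp [Fin.consEquiv, Fin.sum_univ_succ, eq_sub_iff_add_eq']

lemma card_filter_eq_add_ite [Zero A] {f : α → A} {m : ℕ}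
    (hf : ∀ c ≠ 0, #{x | f x = c} = m) (c : A) :
    (#{x | f x = c} : ℤ) = m + (#{x | f x = 0} - m) * if c = 0 then 1 else 0 := by
  by_cases hc : c = 0
  · simp [hc]
  · simp [hc, hf c hc]

lemma card_eq_card_mul_add [Zero A] [Fintype A] {f : α → A} {m : ℕ}
    (hf : ∀ c ≠ 0, #{x | f x = c} = m) :
    (Fintype.card α : ℤ) = Fintype.card A * m + (#{x | f x = 0} - m) := by
  calc (Fintype.card α : ℤ) = ∑ c, (#{x | f x = c} : ℤ) := by
        rw [← card_univ, card_eq_sum_card_fiberwise fun x _ ↦ mem_univ (f x), Nat.cast_sum]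
    _ = ∑ c : A, (m + (#{x | f x = 0} - m) * if c = 0 then 1 else 0 : ℤ) :=
        sum_congr rfl fun c _ ↦ card_filter_eq_add_ite hf c
    _ = Fintype.card A * m + (#{x | f x = 0} - m) := by simp [sum_add_distrib]

theorem card_mul_card_filter_sum_eq [AddCommGroup A] [Fintype A] {f : α → A} {m : ℕ}
    (hf : ∀ c ≠ 0, #{x | f x = c} = m) (n : ℕ) (c : A) :
    (Fintype.card A : ℤ) * #{x : Fin n → α | ∑ i, f (x i) = c} =
      (Fintype.card α : ℤ) ^ n +
        (#{x | f x = 0} - m) ^ n * (Fintype.card A * (if c = 0 then 1 else 0) - 1) := by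
  induction n generalizing c with
  | zero => by_cases hc : c = 0 <;> simp [hc, eq_comm (a := (0 : A))]
  | succ n ih =>
    have sum_indicator :
        ∑ y, (if c - f y = 0 then (1 : ℤ) else 0) = #{x | f x = c} := by
      simp [sub_eq_zero, eq_comm (a := c)]
    rw [card_filter_sum_succ_eq, Nat.cast_sum, mul_sum]
    simp only [ih, sum_add_distrib, ← mul_sum, sum_sub_distrib, sum_indicator, sum_const,
      card_univ, nsmul_eq_mul]
    rw [card_filter_eq_add_ite hf c, pow_succ, card_eq_card_mul_add hf]
    ring

end FibreCounts

section Norm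

variable (F K : Type*) [Field F] [DecidableEq F] [Field K] [Fintype K] [Algebra F K]

lemma card_filter_norm_eq_zero : #{x : K | Algebra.norm F x = 0} = 1 :=
  card_eq_one.2 ⟨0, by ext x; simp [Algebra.norm_eq_zero_iff]⟩

variable {F}

lemma card_filter_norm_eq_card_filter_norm_eq_one {c : F} (hc : c ≠ 0) :
    #{x : K | Algebra.norm F x = c} = #{x : K | Algebra.norm F x = 1} := by
  obtain ⟨y, rfl⟩ := FiniteField.norm_surjective F K c
  have hy : y ≠ 0 := by rintro rfl; simp at hc
  refine (card_equiv (Equiv.mulLeft₀ y hy) fun x ↦ ?_).symm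
  simp [hc]

variable [Fintype F]

theorem card_filter_norm_eq {c : F} (hc : c ≠ 0) :
    #{x : K | Algebra.norm F x = c} = (Fintype.card K - 1) / (Fintype.card F - 1) := by
  have hfib := card_eq_card_mul_add fun d (hd : d ≠ 0) ↦
    (card_filter_norm_eq_card_filter_norm_eq_one K hd).trans
      (card_filter_norm_eq_card_filter_norm_eq_one K hc).symm
  have hF : 1 < Fintype.card F := Fintype.one_lt_card
  rw [card_filter_norm_eq_zero] at hfib
  refine (Nat.div_eq_of_eq_mul_right (by omega) ?_).symm
  zify [hF.le, Fintype.card_pos (α := K)]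
  linear_combination hfib

theorem card_mul_card_filter_sum_norm_eq (n : ℕ) (c : F) :
    (Fintype.card F : ℤ) * #{x : Fin n → K | ∑ i, Algebra.norm F (x i) = c} =
      (Fintype.card K : ℤ) ^ n +
        (1 - ((Fintype.card K - 1) / (Fintype.card F - 1) : ℕ)) ^ n *
          (Fintype.card F * (if c = 0 then 1 else 0) - 1) := by
  simpa only [card_filter_norm_eq_zero, Nat.cast_one] using
    card_mul_card_filter_sum_eq (fun _ ↦ card_filter_norm_eq K) n c

end Norm

theorem exists_subfield_natCard_eq {K : Type*} [Field K] [Finite K] {q n : ℕ}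
    (hK : Nat.card K = q ^ n) : ∃ F : Subfield K, Nat.card F = q := by
  have hn : n ≠ 0 := by
    rintro rfl
    exact Finite.one_lt_card.ne' (hK.trans (pow_zero q))
  obtain ⟨r, hchar⟩ := CharP.exists K
  have : Fact r.Prime := ⟨CharP.char_is_prime K r⟩
  let : Algebra (ZMod r) K := ZMod.algebra K r
  have card_K : r ^ Module.finrank (ZMod r) K = q ^ n :=
    (FiniteField.pow_finrank_eq_natCard r K).trans hK
  obtain ⟨k, -, rfl⟩ := (Nat.dvd_prime_pow Fact.out).1 (card_K ▸ dvd_pow_self q hn)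
  have finrank_K : Module.finrank (ZMod r) K = k * n :=
    Nat.pow_right_injective (Nat.Prime.two_le Fact.out) (card_K.trans (pow_mul r k n).symm)
  have hk : k ≠ 0 := by
    rintro rfl
    simpa [finrank_K] using Module.finrank_pos (R := ZMod r) (M := K)
  obtain ⟨φ⟩ : Nonempty (GaloisField r k →ₐ[ZMod r] K) :=
    FiniteField.nonempty_algHom_of_finrank_dvd <| by
      rw [GaloisField.finrank r hk, finrank_K]
      exact dvd_mul_right k n
  refine ⟨(φ : GaloisField r k →+* K).fieldRange, ?_⟩
  rw [← GaloisField.card r k hk]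
  exact Nat.card_range_of_injective φ.injective

lemma sq_sub_one_div_sub_one {q : ℕ} (hq : 1 < q) : (q ^ 2 - 1) / (q - 1) = q + 1 := by
  rw [← one_pow 2, Nat.sq_sub_sq, one_pow, Nat.mul_div_cancel _ (Nat.sub_pos_of_lt hq)]

section Quadratic

variable {F K : Type*} [Field F] [Fintype F] [Field K] [Fintype K] [Algebra F K]

lemma algebraMap_norm_eq_pow_card_add_one (hK : Fintype.card K = Fintype.card F ^ 2) (x : K) :
    algebraMap F K (Algebra.norm F x) = x ^ (Fintype.card F + 1) := by
  rw [FiniteField.algebraMap_norm_eq_pow, Nat.card_eq_fintype_card, Nat.card_eq_fintype_card, hK,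
    sq_sub_one_div_sub_one Fintype.one_lt_card]

lemma fermatAffineCount_card_eq_card_filter_norm [DecidableEq F]
    (hK : Fintype.card K = Fintype.card F ^ 2) (l : ℕ) :
    fermatAffineCount (Fintype.card F) K l =
      #{x : Fin l → K | ∑ i, Algebra.norm F (x i) = -1} := by
  classical
  rw [fermatAffineCount, Nat.card_eq_fintype_card, Fintype.card_subtype]
  congr! 2 with x
  simp only [← algebraMap_norm_eq_pow_card_add_one hK, ← map_sum, ← map_one (algebraMap F K),
    ← map_add, map_eq_zero, add_comm (1 : F), add_eq_zero_iff_eq_neg]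

end Quadratic

theorem mul_fermatAffineCount {K : Type*} [Field K] [Fintype K] {q : ℕ}
    (hK : Fintype.card K = q ^ 2) (l : ℕ) :
    (q : ℤ) * fermatAffineCount q K l = (q : ℤ) ^ (2 * l) - (-q : ℤ) ^ l := by
  classical
  obtain ⟨F, rfl⟩ := exists_subfield_natCard_eq (Nat.card_eq_fintype_card.trans hK)
  rw [Nat.card_eq_fintype_card] at hK ⊢
  rw [fermatAffineCount_card_eq_card_filter_norm hK, card_mul_card_filter_sum_norm_eq, hK,
    sq_sub_one_div_sub_one Fintype.one_lt_card, if_neg (neg_ne_zero.2 one_ne_zero)]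
  push_cast
  ring

theorem fermatAffineCount_eq_general
    (q : ℕ) (K : Type*) [Field K] [Fintype K] (hK : Fintype.card K = q ^ 2)
    (l : ℕ) (hl : 1 ≤ l) :
    (fermatAffineCount q K l : ℤ) =
        (q : ℤ) ^ (2 * l - 1) + (-1) ^ (l - 1) * (q : ℤ) ^ (l - 1) ∧
    (Odd l → fermatAffineCount q K l = q ^ (2 * l - 1) + q ^ (l - 1)) ∧
    (Even l → fermatAffineCount q K l = q ^ (2 * l - 1) - q ^ (l - 1)) := by
  obtain ⟨m, rfl⟩ := Nat.exists_eq_add_of_le' hl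
  have hq : (q : ℤ) ≠ 0 := by
    intro hq
    simp [Nat.cast_eq_zero.1 hq] at hK
  have hcount : (fermatAffineCount q K (m + 1) : ℤ) =
      (q : ℤ) ^ (2 * m + 1) + (-1) ^ m * (q : ℤ) ^ m := by
    apply mul_left_cancel₀ hq
    rw [mul_fermatAffineCount hK, neg_pow]
    ring
  simp only [show 2 * (m + 1) - 1 = 2 * m + 1 by omega, Nat.add_sub_cancel]
  refine ⟨hcount, fun hodd ↦ ?_, fun heven ↦ ?_⟩
  · have hm : Even m := by simpa [Nat.odd_add_one] using hodd
    zify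
    rw [hcount, hm.neg_one_pow, one_mul]
  · have hm : Odd m := by simpa [Nat.even_add_one] using heven
    have hadd : fermatAffineCount q K (m + 1) + q ^ m = q ^ (2 * m + 1) := by
      zify
      rw [hcount, hm.neg_one_pow]
      ring
    omega

/-- Let `p > 2` be a prime and `K` a field with `p^2` elements.  For every `l ≥ 1` the
count `a_l` equals `p^{2l−1} + (−1)^{l−1} p^{l−1}`; that is, `a_l = p^{2l−1} + p^{l−1}`
if `l` is odd and `a_l = p^{2l−1} − p^{l−1}` if `l` is even. -/
theorem fermatAffineCount_eq
    (p : ℕ) (hp : p.Prime) (hp2 : 2 < p)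
    (K : Type*) [Field K] [Fintype K] (hK : Fintype.card K = p ^ 2)
    (l : ℕ) (hl : 1 ≤ l) :
    (fermatAffineCount p K l : ℤ) =
        (p : ℤ) ^ (2 * l - 1) + (-1) ^ (l - 1) * (p : ℤ) ^ (l - 1) ∧
    (Odd l → fermatAffineCount p K l = p ^ (2 * l - 1) + p ^ (l - 1)) ∧
    (Even l → fermatAffineCount p K l = p ^ (2 * l - 1) - p ^ (l - 1)) :=
  fermatAffineCount_eq_general p K hK l hl
end

section
/- For every integer l ≥ 2, the counts a_l satisfy the recursion a_l + p·a_{l−1} = (p+1)·p^{2(l−1)}. -/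
section SumEquation

variable {α A : Type*} [AddCommGroup A]

/-- The solutions of `c + f x₀ + ⋯ + f xₙ = 0`, fibred over `(x₁, …, xₙ)`. -/
def solutionsSuccEquivSigma (f : α → A) (c : A) (n : ℕ) :
    {x : Fin (n + 1) → α // c + ∑ i, f (x i) = 0} ≃
      Σ x : Fin n → α, {z : α // f z = -(c + ∑ i, f (x i))} where
  toFun x := ⟨Fin.tail x.1, x.1 0, by
    have hx := x.2
    rwa [Fin.sum_univ_succ, add_left_comm, ← eq_neg_iff_add_eq_zero] at hx⟩
  invFun s := ⟨Fin.cons s.2.1 s.1, by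
    simp only [Fin.sum_univ_succ, Fin.cons_zero, Fin.cons_succ, s.2.2]; abel⟩
  left_inv x := Subtype.ext (Fin.cons_self_tail x.1)
  right_inv _ := rfl

theorem card_solutions_succ_add [Finite α] {f : α → A} {c : A} (S : AddSubgroup A) (hc : c ∈ S)
    (hf : ∀ z, f z ∈ S) {k m : ℕ} (hzero : Nat.card {z // f z = 0} + k = m)
    (hne : ∀ y ∈ S, y ≠ 0 → Nat.card {z // f z = y} = m) (n : ℕ) :
    Nat.card {x : Fin (n + 1) → α // c + ∑ i, f (x i) = 0} +
        k * Nat.card {x : Fin n → α // c + ∑ i, f (x i) = 0} =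
      m * Nat.card α ^ n := by
  classical
  have := Fintype.ofFinite α
  have hfibre (x : Fin n → α) :
      Nat.card {z // f z = -(c + ∑ i, f (x i))} + (if c + ∑ i, f (x i) = 0 then k else 0) = m := by
    split_ifs with hx
    · rw [hx, neg_zero, hzero]
    · exact hne _ (S.neg_mem (S.add_mem hc (S.sum_mem fun i _ => hf (x i)))) (neg_ne_zero.2 hx)
  have hbase : k * Nat.card {x : Fin n → α // c + ∑ i, f (x i) = 0} =
      ∑ x : Fin n → α, if c + ∑ i, f (x i) = 0 then k else 0 := by
    rw [Nat.card_eq_fintype_card, Fintype.card_subtype, ← Finset.sum_filter, Finset.sum_const,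
      smul_eq_mul, mul_comm]
  calc _ = ∑ x : Fin n → α, (Nat.card {z // f z = -(c + ∑ i, f (x i))} +
          if c + ∑ i, f (x i) = 0 then k else 0) := by
        rw [hbase, Nat.card_congr (solutionsSuccEquivSigma f c n), Nat.card_sigma,
          Finset.sum_add_distrib]
    _ = ∑ _x : Fin n → α, m := Finset.sum_congr rfl fun x _ => hfibre x
    _ = m * Nat.card α ^ n := by
        rw [Finset.sum_const, Finset.card_univ, Fintype.card_fun, Fintype.card_fin, smul_eq_mul,
          mul_comm, Nat.card_eq_fintype_card]

end SumEquation

section PowerFibres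

theorem range_powMonoidHom_eq_ker_powMonoidHom {G : Type*} [CommGroup G] [IsCyclic G] [Finite G]
    {d m : ℕ} (hG : Nat.card G = d * m) :
    (powMonoidHom d : G →* G).range = (powMonoidHom m : G →* G).ker := by
  have hd : 0 < d := Nat.pos_of_mul_pos_right (hG ▸ Nat.card_pos)
  refine Subgroup.eq_of_le_of_card_ge ?_ (le_of_eq ?_)
  · rintro _ ⟨z, rfl⟩
    simp only [MonoidHom.mem_ker, powMonoidHom_apply, ← pow_mul, ← hG, pow_card_eq_one']
  · rw [IsCyclic.card_powMonoidHom_ker, IsCyclic.card_powMonoidHom_range, hG,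
      Nat.gcd_mul_left_left, Nat.gcd_mul_right_left, Nat.mul_div_cancel_left m hd]

theorem card_pow_eq_of_pow_eq_one {G : Type*} [CommGroup G] [IsCyclic G] [Finite G]
    {d m : ℕ} (hG : Nat.card G = d * m) {y : G} (hy : y ^ m = 1) :
    Nat.card {z : G // z ^ d = y} = d := by
  obtain ⟨w, rfl⟩ : y ∈ (powMonoidHom d : G →* G).range := by
    rwa [range_powMonoidHom_eq_ker_powMonoidHom hG]
  calc Nat.card {z : G // z ^ d = w ^ d}
      = Nat.card (powMonoidHom d : G →* G).ker :=
        Nat.card_congr ((powMonoidHom d : G →* G).fiberEquivKer w)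
    _ = d := by rw [IsCyclic.card_powMonoidHom_ker, hG, Nat.gcd_mul_right_left]

theorem card_pow_eq_units_val {M : Type*} [Monoid M] {d : ℕ} (hd : d ≠ 0) (u : Mˣ) :
    Nat.card {z : M // z ^ d = u} = Nat.card {v : Mˣ // v ^ d = u} := by
  refine (Nat.card_eq_of_bijective
    (fun v : {v : Mˣ // v ^ d = u} => (⟨v.1, by rw [← Units.val_pow_eq_pow_val, v.2]⟩ :
      {z : M // z ^ d = u})) ⟨fun v w h => ?_, fun ⟨z, hz⟩ => ?_⟩).symm
  · exact Subtype.ext (Units.ext (congrArg Subtype.val h))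
  · obtain ⟨v, rfl⟩ : IsUnit z := (isUnit_pow_iff hd).1 (hz ▸ u.isUnit)
    exact ⟨⟨v, Units.ext hz⟩, rfl⟩

end PowerFibres

section FiniteField

variable {K : Type*} [Field K] [Finite K] {q : ℕ}

theorem exists_subfield_mem_iff_pow_eq_self (hq : q ∣ Nat.card K) :
    ∃ F : Subfield K, ∀ z, z ∈ F ↔ z ^ q = z := by
  have := Fintype.ofFinite K
  obtain ⟨p, _, n, hp, hK⟩ := FiniteField.card' K
  have : Fact p.Prime := ⟨hp⟩
  rw [Nat.card_eq_fintype_card, hK] at hq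
  obtain ⟨k, -, rfl⟩ := (Nat.dvd_prime_pow hp).1 hq
  exact ⟨(iterateFrobenius K p k).eqLocusField (RingHom.id K), fun _ => Iff.rfl⟩

theorem pow_succ_pow_eq_pow_succ (hK : Nat.card K = q ^ 2) (z : K) :
    (z ^ (q + 1)) ^ q = z ^ (q + 1) := by
  have := Fintype.ofFinite K
  have hz : z ^ q ^ 2 = z := by rw [← hK, Nat.card_eq_fintype_card, FiniteField.pow_card]
  calc (z ^ (q + 1)) ^ q = z ^ q ^ 2 * z ^ q := by ring
    _ = z ^ (q + 1) := by rw [hz, pow_succ']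

theorem card_pow_succ_eq_of_pow_eq_self (hK : Nat.card K = q ^ 2) {y : K} (hy : y ^ q = y)
    (hy0 : y ≠ 0) : Nat.card {z : K // z ^ (q + 1) = y} = q + 1 := by
  have hq : q ≠ 0 := by
    rintro rfl
    exact Nat.card_pos.ne' hK
  have hunits : Nat.card Kˣ = (q + 1) * (q - 1) := by
    rw [Nat.card_units, hK, ← Nat.sq_sub_sq, one_pow]
  lift y to Kˣ using hy0.isUnit
  have hroot : y ^ (q - 1) = 1 := by
    rw [← mul_eq_right (b := y), pow_sub_one_mul hq]
    exact Units.ext hy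
  rw [card_pow_eq_units_val q.succ_ne_zero, card_pow_eq_of_pow_eq_one hunits hroot]

end FiniteField

theorem fermatAffineCount_recursion_general {q : ℕ} {K : Type*} [Field K] [Finite K]
    (hK : Nat.card K = q ^ 2) (n : ℕ) :
    fermatAffineCount q K (n + 1) + q * fermatAffineCount q K n = (q + 1) * q ^ (2 * n) := by
  obtain ⟨F, hF⟩ := exists_subfield_mem_iff_pow_eq_self (hK ▸ dvd_pow_self q two_ne_zero)
  have hzero : Nat.card {z : K // z ^ (q + 1) = 0} = 1 := by
    simp only [pow_eq_zero_iff q.succ_ne_zero, Nat.card_unique]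
  rw [pow_mul, ← hK]
  exact card_solutions_succ_add F.toAddSubgroup F.one_mem
    (fun z => (hF _).2 (pow_succ_pow_eq_pow_succ hK z)) (by rw [hzero, add_comm])
    (fun y hy hy0 => card_pow_succ_eq_of_pow_eq_self hK ((hF y).1 hy) hy0) n

/-- Let `p > 2` be a prime and `K` a field with `p^2` elements.  For every `l ≥ 2` the
counts `a_l` satisfy the recursion `a_l + p · a_{l−1} = (p+1) · p^{2(l−1)}`. -/
theorem fermatAffineCount_recursion
    (p : ℕ) (hp : p.Prime) (hp2 : 2 < p)
    (K : Type*) [Field K] [Fintype K] (hK : Fintype.card K = p ^ 2)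
    (l : ℕ) (hl : 2 ≤ l) :
    fermatAffineCount p K l + p * fermatAffineCount p K (l - 1) =
      (p + 1) * p ^ (2 * (l - 1)) := by
  obtain ⟨n, rfl⟩ := Nat.exists_eq_add_of_le' hl
  exact fermatAffineCount_recursion_general (Nat.card_eq_fintype_card.trans hK) (n + 1)
end

section
/- For every integer l ≥ 1, the number of nonzero vectors x = (x_0,…,x_l) ∈ K^{l+1} with x_0^{p+1} + x_1^{p+1} + ⋯ + x_l^{p+1} = 0 equals (p^2 − 1)·(p^{l+1} + 1)·Σ_l if l is even, and (p^2 − 1)·(p^l + 1)·Σ_l if l is odd. Equivalently, the Fermat hypersurface X_0^{p+1} + ⋯ + X_l^{p+1} = 0 in projective l-space has (p^{l+1} + 1)·Σ_l points over K if l is even and (p^l + 1)·Σ_l points over K if l is odd. -/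
/-!
Write `q ^ 2` for the cardinality of `K`. The norm `t ↦ t ^ (q + 1)` of `K` over its subfield `F` of
order `q` takes the value `0` once and each nonzero value in `F` exactly `q + 1` times, and
`-∑ i, y i ^ (q + 1)` always lies in `F`. So a vector `y` extends by one coordinate to a zero of the
equation in a single way if it is itself a zero, and in `q + 1` ways otherwise. The resulting
one-step recursion for the number of zeros solves to
`q ^ (2 * n + 1) - (-1) ^ n * (q - 1) * q ^ n` in dimension `n + 1`.
-/

/-- `fermatSigma p l` is the sum `Σ_l = Σ_{j=0}^{⌊(l−1)/2⌋} p^{2j}`. -/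
def fermatSigma (p l : ℕ) : ℕ :=
  ∑ j ∈ Finset.range ((l - 1) / 2 + 1), p ^ (2 * j)

/-- The affine cone over the Fermat hypersurface of degree `d` in projective `(n - 1)`-space: the
set of all solutions in `K ^ n` of `∑ i, x i ^ d = 0`, including `0`. -/
def fermatCone (K : Type*) [Semiring K] (d n : ℕ) : Set (Fin n → K) :=
  {x | ∑ i, x i ^ d = 0}

section PowerFibers

theorem card_pow_eq_of_isCyclic {G : Type*} [CommGroup G] [Finite G] [IsCyclic G] {m n : ℕ}
    (hG : Nat.card G = m * n) {c : G} (hc : c ^ m = 1) :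
    Nat.card {u : G // u ^ n = c} = n := by
  have hmn : 0 < m * n := hG ▸ Nat.card_pos
  have hn : 0 < n := Nat.pos_of_mul_pos_left hmn
  have range_le_ker : (powMonoidHom n : G →* G).range ≤ (powMonoidHom m).ker := by
    rintro _ ⟨u, rfl⟩
    simp only [MonoidHom.mem_ker, powMonoidHom_apply, ← pow_mul, mul_comm n m, ← hG,
      pow_card_eq_one']
  have range_eq_ker : (powMonoidHom n : G →* G).range = (powMonoidHom m).ker := by
    refine Subgroup.eq_of_le_of_card_ge range_le_ker ?_
    rw [IsCyclic.card_powMonoidHom_range, IsCyclic.card_powMonoidHom_ker, hG,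
      Nat.gcd_mul_left_left, Nat.gcd_mul_right_left, Nat.mul_div_cancel _ hn]
  have hc_range : c ∈ (powMonoidHom n : G →* G).range := range_eq_ker ▸ hc
  calc Nat.card {u : G // u ^ n = c}
      = Nat.card (powMonoidHom n : G →* G).ker := by
        have := Fintype.ofFinite G
        classical
        simpa [Nat.card_eq_fintype_card, Fintype.card_subtype, MonoidHom.mem_ker] using
          MonoidHom.card_fiber_eq_of_mem_range (powMonoidHom n : G →* G) hc_range
            (one_mem (powMonoidHom n : G →* G).range)
    _ = n := by rw [IsCyclic.card_powMonoidHom_ker, hG, Nat.gcd_mul_left_left]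

variable {K : Type*} [Field K] [Finite K]

theorem card_pow_eq_of_pow_eq_one_s6 {m n : ℕ} (hK : Nat.card K = m * n + 1) {c : K}
    (hc : c ^ m = 1) : Nat.card {t : K // t ^ n = c} = n := by
  have hcard : Nat.card Kˣ = m * n := by rw [Nat.card_units, hK, Nat.add_sub_cancel]
  have hmn : m * n ≠ 0 := by rw [← hcard]; exact Nat.card_pos.ne'
  have hc0 : c ≠ 0 := ne_zero_pow (left_ne_zero_of_mul hmn) (by rw [hc]; exact one_ne_zero)
  let e : {u : Kˣ // u ^ n = Units.mk0 c hc0} ≃ {t : K // t ^ n = c} :=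
    { toFun u := ⟨u.1, by simpa using congrArg Units.val u.2⟩
      invFun t := ⟨Units.mk0 t (ne_zero_pow (right_ne_zero_of_mul hmn) (by rwa [t.2])),
        Units.ext (by simpa using t.2)⟩
      left_inv u := by ext; rfl
      right_inv t := rfl }
  rw [← Nat.card_congr e]
  exact card_pow_eq_of_isCyclic hcard (Units.ext (by simpa using hc))

end PowerFibers

section Norm

variable {K : Type*} [Field K] [Finite K] {q : ℕ}

theorem exists_ringHom_eq_pow_of_card_eq_pow {k : ℕ} (hk : k ≠ 0) (hK : Nat.card K = q ^ k) :
    ∃ φ : K →+* K, ∀ x, φ x = x ^ q := by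
  have := Fintype.ofFinite K
  obtain ⟨r, _, s, hr, hcard⟩ := FiniteField.card' K
  have := Fact.mk hr
  have hdvd : q ∣ r ^ (s : ℕ) := by
    rw [← hcard, ← Nat.card_eq_fintype_card, hK]
    exact dvd_pow_self q hk
  obtain ⟨j, -, rfl⟩ := (Nat.dvd_prime_pow hr).1 hdvd
  exact ⟨iterateFrobenius K r j, iterateFrobenius_def r j⟩

variable (hK : Nat.card K = q ^ 2)
include hK

theorem card_pow_succ_eq_of_pow_eq_self_s6 {c : K} (hc0 : c ≠ 0) (hc : c ^ q = c) :
    Nat.card {t : K // t ^ (q + 1) = c} = q + 1 := by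
  have hq : 0 < q := Nat.pos_of_ne_zero fun h ↦ Nat.card_pos.ne' (by simpa [h] using hK)
  have hcard : Nat.card K = (q - 1) * (q + 1) + 1 := by
    rw [hK, mul_comm, ← Nat.sq_sub_sq, one_pow, Nat.sub_add_cancel (Nat.one_le_pow _ _ hq)]
  refine card_pow_eq_of_pow_eq_one_s6 hcard (mul_right_cancel₀ hc0 ?_)
  rw [pow_sub_one_mul hq.ne', hc, one_mul]

theorem neg_sum_pow_succ_pow_eq_self {ι : Type*} (s : Finset ι) (y : ι → K) :
    (-∑ i ∈ s, y i ^ (q + 1)) ^ q = -∑ i ∈ s, y i ^ (q + 1) := by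
  obtain ⟨φ, hφ⟩ := exists_ringHom_eq_pow_of_card_eq_pow two_ne_zero hK
  have hφφ (x : K) : φ (φ x) = x := by
    have := Fintype.ofFinite K
    rw [hφ, hφ, ← pow_mul, ← sq, ← hK, Nat.card_eq_fintype_card, FiniteField.pow_card]
  rw [← hφ, map_neg, map_sum]
  simp only [pow_succ, ← hφ, map_mul, hφφ, mul_comm]

end Norm

section Cone

theorem zero_mem_fermatCone {K : Type*} [Semiring K] {d : ℕ} (hd : d ≠ 0) (n : ℕ) :
    0 ∈ fermatCone K d n := by
  simp [fermatCone, hd]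

/-- The cone in dimension `n + 1`, fibred over `K ^ n` by forgetting the first coordinate. -/
def fermatConeSuccEquiv (K : Type*) [Ring K] (d n : ℕ) :
    fermatCone K d (n + 1) ≃ Σ y : Fin n → K, {t : K // t ^ d = -∑ i, y i ^ d} where
  toFun x := ⟨Fin.tail x.1, x.1 0,
    eq_neg_of_add_eq_zero_left ((Fin.sum_univ_succ _).symm.trans x.2)⟩
  invFun z := ⟨Fin.cons z.2.1 z.1, by simp [fermatCone, Fin.sum_univ_succ, z.2.2]⟩
  left_inv x := by simp
  right_inv _ := rfl

variable {K : Type*} [Field K] [Finite K] {q : ℕ} (hK : Nat.card K = q ^ 2)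
include hK

open Classical in
theorem card_fermatCone_fiber {n : ℕ} (y : Fin n → K) :
    Nat.card {t : K // t ^ (q + 1) = -∑ i, y i ^ (q + 1)} =
      if y ∈ fermatCone K (q + 1) n then 1 else q + 1 := by
  split_ifs with hy
  · have hsum : ∑ i, y i ^ (q + 1) = 0 := hy
    simp [hsum]
  · exact card_pow_succ_eq_of_pow_eq_self_s6 hK (neg_ne_zero.2 hy)
      (neg_sum_pow_succ_pow_eq_self hK _ y)

theorem card_fermatCone_succ_add (n : ℕ) :
    Nat.card (fermatCone K (q + 1) (n + 1)) + q * Nat.card (fermatCone K (q + 1) n) =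
      (q + 1) * q ^ (2 * n) := by
  classical
  have := Fintype.ofFinite K
  have hcone : Nat.card (fermatCone K (q + 1) n) =
      ∑ y : Fin n → K, if y ∈ fermatCone K (q + 1) n then 1 else 0 := by
    rw [Nat.card_eq_fintype_card, Fintype.card_subtype, Finset.card_filter]
  calc _ = ∑ y : Fin n → K, ((if y ∈ fermatCone K (q + 1) n then 1 else q + 1) +
          q * if y ∈ fermatCone K (q + 1) n then 1 else 0) := by
        rw [Nat.card_congr (fermatConeSuccEquiv K (q + 1) n), Nat.card_sigma, hcone,
          Finset.mul_sum, ← Finset.sum_add_distrib]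
        simp only [card_fermatCone_fiber hK]
    _ = ∑ _y : Fin n → K, (q + 1) := Finset.sum_congr rfl fun y _ ↦ by split_ifs <;> ring
    _ = (q + 1) * q ^ (2 * n) := by
        rw [Finset.sum_const, Finset.card_univ, Fintype.card_fun, Fintype.card_fin,
          ← Nat.card_eq_fintype_card, hK, ← pow_mul, smul_eq_mul, mul_comm]

theorem card_fermatCone_succ (n : ℕ) :
    (Nat.card (fermatCone K (q + 1) (n + 1)) : ℤ) =
      q ^ (2 * n + 1) - (-1) ^ n * (q - 1) * q ^ n := by
  have recursion (n : ℕ) : (Nat.card (fermatCone K (q + 1) (n + 1)) : ℤ) =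
      (q + 1) * q ^ (2 * n) - q * Nat.card (fermatCone K (q + 1) n) :=
    eq_sub_of_add_eq (mod_cast card_fermatCone_succ_add hK n)
  induction n with
  | zero =>
    rw [recursion]
    simp [fermatCone]
  | succ n ih =>
    rw [recursion, ih]
    ring

theorem card_fermatCone_succ_sdiff_zero (n : ℕ) :
    (Nat.card ↥(fermatCone K (q + 1) (n + 1) \ {0}) : ℤ) =
      (q ^ (n + 1) + (-1) ^ n) * (q ^ n - (-1) ^ n) := by
  have hcount : Nat.card ↥(fermatCone K (q + 1) (n + 1) \ {0}) + 1 =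
      Nat.card (fermatCone K (q + 1) (n + 1)) :=
    Set.ncard_sdiff_singleton_add_one (zero_mem_fermatCone q.succ_ne_zero _)
  have hsign : ((-1) ^ n * (-1) ^ n : ℤ) = 1 := by simp [← mul_pow]
  calc _ = (Nat.card (fermatCone K (q + 1) (n + 1)) : ℤ) - 1 :=
        eq_sub_of_add_eq (mod_cast hcount)
    _ = q ^ (2 * n + 1) - (-1) ^ n * (q - 1) * q ^ n - 1 := by rw [card_fermatCone_succ hK]
    _ = _ := by linear_combination hsign

end Cone

theorem sq_sub_one_mul_fermatSigma (q l : ℕ) :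
    ((q : ℤ) ^ 2 - 1) * fermatSigma q l = q ^ (2 * ((l - 1) / 2 + 1)) - 1 := by
  simp only [fermatSigma, Nat.cast_sum, Nat.cast_pow, pow_mul, mul_geom_sum]

theorem fermat_nonzero_count_closed_formula_general
    (q : ℕ) (K : Type*) [Field K] [Finite K] (hK : Nat.card K = q ^ 2) (l : ℕ) (hl : 1 ≤ l) :
    (Even l →
      Nat.card {x : Fin (l + 1) → K // x ≠ 0 ∧ ∑ i, x i ^ (q + 1) = 0} =
        (q ^ 2 - 1) * ((q ^ (l + 1) + 1) * fermatSigma q l)) ∧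
    (Odd l →
      Nat.card {x : Fin (l + 1) → K // x ≠ 0 ∧ ∑ i, x i ^ (q + 1) = 0} =
        (q ^ 2 - 1) * ((q ^ l + 1) * fermatSigma q l)) := by
  have hq : 1 ≤ q ^ 2 := hK ▸ Nat.card_pos
  have hcount : (Nat.card {x : Fin (l + 1) → K // x ≠ 0 ∧ ∑ i, x i ^ (q + 1) = 0} : ℤ) =
      (q ^ (l + 1) + (-1) ^ l) * (q ^ l - (-1) ^ l) := by
    rw [← card_fermatCone_succ_sdiff_zero hK,
      Nat.card_congr (Equiv.subtypeEquivRight fun _ ↦ and_comm)]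
    rfl
  have hsigma := sq_sub_one_mul_fermatSigma q l
  constructor <;> intro hparity <;> zify [hq] <;> rw [hcount, hparity.neg_one_pow]
  · have hexp : 2 * ((l - 1) / 2 + 1) = l := by grind
    rw [hexp] at hsigma
    linear_combination -(q ^ (l + 1) + 1 : ℤ) * hsigma
  · have hexp : 2 * ((l - 1) / 2 + 1) = l + 1 := by grind
    rw [hexp] at hsigma
    linear_combination -(q ^ l + 1 : ℤ) * hsigma

/-- Let `p > 2` be a prime and `K` a field with `p^2` elements.  For every `l ≥ 1`, the
number of nonzero vectors `x = (x_0, …, x_l) ∈ K^{l+1}` with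
`x_0^{p+1} + ⋯ + x_l^{p+1} = 0` equals `(p^2 − 1)(p^{l+1} + 1)Σ_l` if `l` is even and
`(p^2 − 1)(p^l + 1)Σ_l` if `l` is odd; equivalently, the Fermat hypersurface of degree
`p+1` in projective `l`-space has `(p^{l+1} + 1)Σ_l` points over `K` if `l` is even and
`(p^l + 1)Σ_l` points over `K` if `l` is odd. -/
theorem fermat_nonzero_count_closed_formula
    (p : ℕ) (hp : p.Prime) (hp2 : 2 < p)
    (K : Type*) [Field K] [Fintype K] (hK : Fintype.card K = p ^ 2)
    (l : ℕ) (hl : 1 ≤ l) :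
    (Even l →
      Nat.card {x : Fin (l + 1) → K // x ≠ 0 ∧ ∑ i, x i ^ (p + 1) = 0} =
        (p ^ 2 - 1) * ((p ^ (l + 1) + 1) * fermatSigma p l)) ∧
    (Odd l →
      Nat.card {x : Fin (l + 1) → K // x ≠ 0 ∧ ∑ i, x i ^ (p + 1) = 0} =
        (p ^ 2 - 1) * ((p ^ l + 1) * fermatSigma p l)) :=
  fermat_nonzero_count_closed_formula_general p K (Nat.card_eq_fintype_card.trans hK) l hl
end

section
/- For every integer l ≥ 2, ν(l−1, l) = (p^l + 1)·Σ_{l−1} if l is odd, and ν(l−1, l) = (p^{l−1} + 1)·Σ_{l−1} if l is even; here Σ_{l−1} = Σ_{j=0}^{⌊(l−2)/2⌋} p^{2j}. In other words, the number of (l−1)-dimensional subspaces U of the standard hermitian space K^l with U^⊥ ⊆ U is given by these closed formulas. -/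
/-- The orthogonal complement `U^⊥` of a subspace `U ⊆ K^l` with respect to the standard
hermitian form `h(x, y) = Σ_i x_i · y_i^p` (where `x ↦ x^p` is the Frobenius of the field
`K` with `p^2` elements over its prime field). -/
def hermitianPerp (p : ℕ) {K : Type*} [Field K] {l : ℕ}
    (U : Submodule K (Fin l → K)) : Submodule K (Fin l → K) where
  carrier := {v | ∀ u ∈ U, ∑ i, v i * u i ^ p = 0}
  zero_mem' := by
    intro u hu
    simp
  add_mem' := by
    intro a b ha hb u hu
    have := ha u hu
    have := hb u hu
    simp only [Pi.add_apply, add_mul, Finset.sum_add_distrib]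
    simp [ha u hu, hb u hu]
  smul_mem' := by
    intro c v hv u hu
    simp only [Pi.smul_apply, smul_eq_mul, mul_assoc, ← Finset.mul_sum]
    simp [hv u hu]

/-- `hermitianNu p K r l` is the number `ν(r, l)` of `r`-dimensional `K`-subspaces `U` of
the standard hermitian space `K^l` satisfying `U^⊥ ⊆ U`. -/
noncomputable def hermitianNu (p : ℕ) (K : Type*) [Field K] (r l : ℕ) : ℕ :=
  Nat.card {U : Submodule K (Fin l → K) //
    Module.finrank K U = r ∧ hermitianPerp p U ≤ U}

/-!
Taking orthogonal complements for a nondegenerate form exchanges the hyperplanes `U` with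
`U^⊥ ⊆ U` and the lines `L` with `L ⊆ L^⊥`, so `ν(l-1, l)` is the number of isotropic lines, and
`(q² - 1) · ν(l-1, l)` is the number of nonzero isotropic vectors of `K^l`, where `q² = |K|`.

The norm `x ↦ x · x^q` takes every nonzero value of the subfield `{b | b^q = b}` exactly `q + 1`
times, and the value `0` once. Splitting off a coordinate, the number `N_l` of isotropic vectors
therefore satisfies `N_{l+1} + q N_l = (q + 1) q^{2l}`, whence
`N_l = 1 + (q^l - (-1)^l) (q^{l-1} - (-1)^{l-1})`. Exactly one of the two factors is of the form
`q^{2k} - 1`, and dividing it by `q² - 1` leaves the sum `1 + q² + ⋯ + q^{2(k-1)}`.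
-/

open Module Submodule

section SesquilinearDuality

lemma finrank_map_eq_of_injective {K K₂ V V₂ : Type*} [DivisionRing K] [DivisionRing K₂]
    [AddCommGroup V] [AddCommGroup V₂] [Module K V] [Module K₂ V₂] {σ : K →+* K₂}
    [RingHomSurjective σ] {f : V →ₛₗ[σ] V₂} (hf : Function.Injective f) (U : Submodule K V) :
    finrank K₂ (U.map f) = finrank K U := by
  let e : U ≃+ U.map f :=
    { Equiv.Set.image f U hf with map_add' := fun u v => Subtype.ext (map_add f u.1 v.1) }
  have hσ : Function.Bijective σ := ⟨σ.injective, σ.surjective⟩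
  have he (c : K) (u : U) : e (c • u) = σ c • e u := Subtype.ext (map_smulₛₗ f c u.1)
  simpa [finrank] using (congrArg Cardinal.toNat (lift_rank_eq_of_equiv_equiv σ e hσ he)).symm

variable {K V : Type*} [Field K] [AddCommGroup V] [Module K V] {σ : K →+* K}
  {B : V →ₛₗ[σ] V →ₗ[K] K}

lemma orthogonalBilin_eq_dualCoannihilator_map [RingHomSurjective σ] (U : Submodule K V) :
    U.orthogonalBilin B = (U.map B).dualCoannihilator := by
  ext v
  simp [mem_dualCoannihilator]

section FiniteDimensional

variable [FiniteDimensional K V] [RingHomSurjective σ]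

lemma finrank_add_finrank_orthogonalBilin (hB : B.SeparatingLeft) (U : Submodule K V) :
    finrank K U + finrank K (U.orthogonalBilin B) = finrank K V := by
  have hinj : Function.Injective B :=
    LinearMap.ker_eq_bot.1 (LinearMap.separatingLeft_iff_ker_eq_bot.1 hB)
  rw [orthogonalBilin_eq_dualCoannihilator_map, ← finrank_map_eq_of_injective hinj U]
  exact Subspace.finrank_add_finrank_dualCoannihilator_eq _

lemma orthogonalBilin_orthogonalBilin (hB : B.SeparatingLeft) (hrefl : B.IsRefl)
    (U : Submodule K V) : (U.orthogonalBilin B).orthogonalBilin B = U := by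
  have hU := finrank_add_finrank_orthogonalBilin hB U
  have hU' := finrank_add_finrank_orthogonalBilin hB (U.orthogonalBilin B)
  exact (eq_of_le_of_finrank_eq (le_orthogonalBilin_orthogonalBilin hrefl) (by omega)).symm

lemma card_coisotropic_eq_card_isotropic (hB : B.SeparatingLeft) (hrefl : B.IsRefl) {r s : ℕ}
    (hrs : r + s = finrank K V) :
    Nat.card {U : Submodule K V // finrank K U = r ∧ U.orthogonalBilin B ≤ U} =
      Nat.card {W : Submodule K V // finrank K W = s ∧ W ≤ W.orthogonalBilin B} := by
  have hinv : Function.Involutive fun U : Submodule K V => U.orthogonalBilin B :=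
    orthogonalBilin_orthogonalBilin hB hrefl
  have finrank_iff (U : Submodule K V) :
      finrank K U = r ↔ finrank K (U.orthogonalBilin B) = s := by
    have := finrank_add_finrank_orthogonalBilin hB U
    omega
  have le_iff (U : Submodule K V) : U.orthogonalBilin B ≤ U ↔
      U.orthogonalBilin B ≤ (U.orthogonalBilin B).orthogonalBilin B := by
    rw [orthogonalBilin_orthogonalBilin hB hrefl]
  exact Nat.card_congr
    (hinv.toPerm.subtypeEquiv fun U => and_congr (finrank_iff U) (le_iff U))

end FiniteDimensional

lemma span_singleton_le_orthogonalBilin_iff {v : V} :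
    span K {v} ≤ (span K {v}).orthogonalBilin B ↔ B v v = 0 := by
  rw [span_singleton_le_iff_mem, mem_orthogonalBilin_iff]
  refine ⟨fun h => h v (mem_span_singleton_self v), fun h u hu => ?_⟩
  obtain ⟨c, rfl⟩ := mem_span_singleton.1 hu
  simp [h]

lemma nonempty_ne_zero_equiv_units_of_finrank_eq_one (h : finrank K V = 1) :
    Nonempty ({v : V // v ≠ 0} ≃ Kˣ) := by
  obtain ⟨e⟩ := nonempty_linearEquiv_of_finrank_eq_one h
  exact ⟨(e.symm.toEquiv.subtypeEquiv fun v => by simp).trans unitsEquivNeZero.symm⟩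

variable (B) in
lemma card_isotropic_lines_mul_card_units :
    Nat.card {L : Submodule K V // finrank K L = 1 ∧ L ≤ L.orthogonalBilin B} * Nat.card Kˣ =
      Nat.card {v : V // v ≠ 0 ∧ B v v = 0} := by
  let Line := {L : Submodule K V // finrank K L = 1 ∧ L ≤ L.orthogonalBilin B}
  have eq_span (L : Line) (v : {v : L.1 // v ≠ 0}) : L.1 = span K {(v.1 : V)} :=
    eq_span_singleton_of_mem_of_finrank_eq_one L.2.1 v.1.2 (by simpa using v.2)
  let toVector (a : Σ L : Line, {v : L.1 // v ≠ 0}) : {v : V // v ≠ 0 ∧ B v v = 0} :=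
    ⟨a.2.1, by simpa using a.2.2, a.1.2.2 a.2.1.2 a.2.1 a.2.1.2⟩
  have bijective_toVector : Function.Bijective toVector := by
    constructor
    · rintro ⟨⟨L, hL⟩, v⟩ ⟨⟨M, hM⟩, w⟩ h
      have hvw : (v.1 : V) = w.1 := congrArg Subtype.val h
      obtain rfl : L = M := (eq_span ⟨L, hL⟩ v).trans (hvw ▸ (eq_span ⟨M, hM⟩ w).symm)
      obtain rfl : v = w := Subtype.ext (Subtype.ext hvw)
      rfl
    · rintro ⟨v, hv, hvv⟩
      exact ⟨⟨⟨span K {v}, finrank_span_singleton hv, span_singleton_le_orthogonalBilin_iff.2 hvv⟩,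
        ⟨⟨v, mem_span_singleton_self v⟩, by simpa using hv⟩⟩, rfl⟩
  let lineUnits (L : Line) : {v : L.1 // v ≠ 0} ≃ Kˣ :=
    (nonempty_ne_zero_equiv_units_of_finrank_eq_one L.2.1).some
  rw [← Nat.card_prod]
  exact Nat.card_congr (((Equiv.sigmaCongrRight lineUnits).trans
    (Equiv.sigmaEquivProd Line Kˣ)).symm.trans (Equiv.ofBijective toVector bijective_toVector))

variable (B) in
lemma card_isotropic_eq_card_ne_zero_add_one [Finite V] :
    Nat.card {v : V // B v v = 0} = Nat.card {v : V // v ≠ 0 ∧ B v v = 0} + 1 := by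
  have := Fintype.ofFinite V
  classical
  have h0 : (0 : V) ∈ Finset.univ.filter fun v => B v v = 0 := by simp
  simp only [Nat.card_eq_fintype_card, Fintype.card_subtype]
  rw [← Finset.card_erase_add_one h0]
  congr 2
  ext v
  simp

end SesquilinearDuality

section HermitianForm

variable {K ι : Type*} [CommRing K] [Fintype ι] (σ : K →+* K)

/-- The sesquilinear form `B(u, v) = Σ v_i σ(u_i)` on `K^ι`, which is the standard hermitian form
when `σ` is an involution. It is semilinear in the first argument and linear in the second, so that
Mathlib's `Submodule.orthogonalBilin` is the complement `{v | ∀ u ∈ U, Σ v_i σ(u_i) = 0}`. -/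
def hermitianForm : (ι → K) →ₛₗ[σ] (ι → K) →ₗ[K] K :=
  LinearMap.mk₂'ₛₗ σ (RingHom.id K) (fun u v => ∑ i, v i * σ (u i))
    (fun u u' v => by simp [mul_add, Finset.sum_add_distrib])
    (fun c u v => by simp [Finset.mul_sum, mul_left_comm])
    (fun u v v' => by simp [add_mul, Finset.sum_add_distrib])
    (fun c u v => by simp [Finset.mul_sum, mul_assoc])

lemma hermitianForm_apply (u v : ι → K) : hermitianForm σ u v = ∑ i, v i * σ (u i) := rfl

lemma hermitianForm_separatingLeft {K : Type*} [Field K] (σ : K →+* K) :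
    (hermitianForm σ (ι := ι)).SeparatingLeft := by
  classical
  intro u hu
  ext i
  simpa [hermitianForm_apply, Pi.single_apply] using hu (Pi.single i 1)

lemma hermitianForm_isSymm [RingHomInvPair σ σ] : (hermitianForm σ (ι := ι)).IsSymm where
  eq u v := by simp [hermitianForm_apply, mul_comm]

/-- An isotropic vector of `K^(l+1)` is a vector `w` of `K^l` together with a first coordinate
of norm `-B(w, w)`. -/
def isotropicSuccEquiv (l : ℕ) : {v : Fin (l + 1) → K // hermitianForm σ v v = 0} ≃
    Σ w : Fin l → K, {x : K // x * σ x = -hermitianForm σ w w} where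
  toFun v := ⟨Fin.tail v.1, v.1 0, by
    have hv := v.2
    rw [hermitianForm_apply, Fin.sum_univ_succ] at hv
    exact eq_neg_of_add_eq_zero_left hv⟩
  invFun a := ⟨Fin.cons a.2.1 a.1, by
    simp [hermitianForm_apply, Fin.sum_univ_succ, a.2.2]⟩
  left_inv v := Subtype.ext (Fin.cons_self_tail v.1)
  right_inv _ := rfl

end HermitianForm

section NormFibers

lemma card_pow_eq_of_card_eq_mul {G : Type*} [CommGroup G] [IsCyclic G] [Finite G] {m n : ℕ}
    (hG : Nat.card G = m * n) {y : G} (hy : y ^ m = 1) : Nat.card {x : G // x ^ n = y} = n := by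
  have hn : 0 < n := Nat.pos_of_mul_pos_left (hG ▸ Nat.card_pos)
  have range_eq_ker : (powMonoidHom n : G →* G).range = (powMonoidHom m).ker := by
    apply Subgroup.eq_of_le_of_card_ge
    · rintro _ ⟨x, rfl⟩
      rw [MonoidHom.mem_ker, powMonoidHom_apply, powMonoidHom_apply, ← pow_mul, mul_comm, ← hG,
        pow_card_eq_one']
    · rw [IsCyclic.card_powMonoidHom_range, IsCyclic.card_powMonoidHom_ker, hG,
        Nat.gcd_mul_right_left, Nat.gcd_mul_left_left, Nat.mul_div_cancel _ hn]
  obtain ⟨a, rfl⟩ : y ∈ (powMonoidHom n : G →* G).range := range_eq_ker ▸ hy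
  calc Nat.card {x : G // x ^ n = a ^ n}
      = Nat.card (powMonoidHom n : G →* G).ker :=
        Nat.card_congr ((powMonoidHom n : G →* G).fiberEquivKer a)
    _ = n := by rw [IsCyclic.card_powMonoidHom_ker, hG, Nat.gcd_mul_left_left]

variable {q : ℕ} {K : Type*} [Field K] [Fintype K]

lemma ne_zero_of_card_eq_sq (hK : Fintype.card K = q ^ 2) : q ≠ 0 := by
  rintro rfl
  simp at hK

lemma card_units_of_card_eq_sq (hK : Fintype.card K = q ^ 2) :
    Nat.card Kˣ = (q - 1) * (q + 1) := by
  rw [Nat.card_units, Nat.card_eq_fintype_card, hK, mul_comm, ← Nat.sq_sub_sq, one_pow]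

lemma card_mul_pow_eq (hK : Fintype.card K = q ^ 2) {b : K} (hb : b ≠ 0) (hbq : b ^ q = b) :
    Nat.card {x : K // x * x ^ q = b} = q + 1 := by
  have hb' : Units.mk0 b hb ^ (q - 1) = 1 := by
    ext
    refine mul_right_cancel₀ hb ?_
    simp [pow_sub_one_mul (ne_zero_of_card_eq_sq hK), hbq]
  have ne_zero {x : K} (hx : x * x ^ q = b) : x ≠ 0 := left_ne_zero_of_mul (hx ▸ hb)
  let e : {x : K // x * x ^ q = b} ≃ {u : Kˣ // u ^ (q + 1) = Units.mk0 b hb} :=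
    { toFun x := ⟨Units.mk0 x.1 (ne_zero x.2), Units.ext <| by simpa [pow_succ'] using x.2⟩
      invFun u := ⟨u.1, by simpa [pow_succ', Units.ext_iff] using u.2⟩
      left_inv _ := rfl
      right_inv _ := Subtype.ext (Units.ext rfl) }
  exact (Nat.card_congr e).trans
    (card_pow_eq_of_card_eq_mul (card_units_of_card_eq_sq hK) hb')

end NormFibers

section FrobeniusConj

variable {q : ℕ} {K : Type*} [Field K] [Fintype K]

lemma add_pow_of_card_eq_sq (hK : Fintype.card K = q ^ 2) (x y : K) :
    (x + y) ^ q = x ^ q + y ^ q := by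
  obtain ⟨p, _, n, hp, hn⟩ := FiniteField.card' K
  have := Fact.mk hp
  obtain ⟨m, -, rfl⟩ := (Nat.dvd_prime_pow hp).1 (hn ▸ hK ▸ dvd_pow_self q two_ne_zero)
  exact add_pow_expChar_pow x y p m

lemma pow_pow_of_card_eq_sq (hK : Fintype.card K = q ^ 2) (x : K) : (x ^ q) ^ q = x := by
  rw [← pow_mul, ← sq, ← hK, FiniteField.pow_card]

/-- The conjugation `x ↦ x^q` of a field with `q²` elements, as a ring homomorphism. -/
def frobeniusConj (hK : Fintype.card K = q ^ 2) : K →+* K where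
  toFun x := x ^ q
  map_one' := one_pow q
  map_mul' x y := mul_pow x y q
  map_zero' := zero_pow (ne_zero_of_card_eq_sq hK)
  map_add' := add_pow_of_card_eq_sq hK

lemma frobeniusConj_apply (hK : Fintype.card K = q ^ 2) (x : K) :
    frobeniusConj hK x = x ^ q := rfl

instance (hK : Fintype.card K = q ^ 2) : RingHomInvPair (frobeniusConj hK) (frobeniusConj hK) where
  comp_eq := RingHom.ext (pow_pow_of_card_eq_sq hK)
  comp_eq₂ := RingHom.ext (pow_pow_of_card_eq_sq hK)

variable (hK : Fintype.card K = q ^ 2)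

lemma card_norm_eq_neg_hermitianForm_self {ι : Type*} [Fintype ι] (w : ι → K)
    [Decidable (hermitianForm (frobeniusConj hK) w w = 0)] :
    Nat.card {x : K // x * frobeniusConj hK x = -hermitianForm (frobeniusConj hK) w w} =
      if hermitianForm (frobeniusConj hK) w w = 0 then 1 else q + 1 := by
  split_ifs with h
  · simp [h]
  · refine card_mul_pow_eq hK (neg_ne_zero.2 h) ?_
    rw [← frobeniusConj_apply hK, map_neg, (hermitianForm_isSymm _).eq]

lemma card_isotropic_succ (l : ℕ) :
    Nat.card {v : Fin (l + 1) → K // hermitianForm (frobeniusConj hK) v v = 0} +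
      q * Nat.card {w : Fin l → K // hermitianForm (frobeniusConj hK) w w = 0} =
        (q + 1) * q ^ (2 * l) := by
  classical
  rw [Nat.card_congr (isotropicSuccEquiv _ l), Nat.card_sigma,
    Nat.card_eq_fintype_card (α := {w : Fin l → K // _}), Fintype.card_subtype, Finset.card_filter,
    Finset.mul_sum, ← Finset.sum_add_distrib]
  simp only [card_norm_eq_neg_hermitianForm_self hK]
  calc _ = ∑ w : Fin l → K, (q + 1) := Finset.sum_congr rfl fun w _ => by split_ifs <;> ring
    _ = (q + 1) * q ^ (2 * l) := by simp [hK, ← pow_mul, mul_comm]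

lemma card_isotropic (n : ℕ) :
    (Nat.card {v : Fin (n + 1) → K // hermitianForm (frobeniusConj hK) v v = 0} : ℤ) =
      1 + ((q : ℤ) ^ (n + 1) - (-1) ^ (n + 1)) * (q ^ n - (-1) ^ n) := by
  induction n with
  | zero =>
    have h := card_isotropic_succ hK 0
    have h0 : Nat.card {w : Fin 0 → K // hermitianForm (frobeniusConj hK) w w = 0} = 1 := by
      simp [hermitianForm_apply]
    rw [h0, mul_zero, pow_zero] at h
    have h1 : Nat.card {v : Fin (0 + 1) → K // hermitianForm (frobeniusConj hK) v v = 0} = 1 := by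
      lia
    rw [h1]
    simp
  | succ n ih =>
    have h := congrArg (Nat.cast : ℕ → ℤ) (card_isotropic_succ hK (n + 1))
    push_cast at h
    have hsq : ((-1 : ℤ) ^ n) ^ 2 = 1 := by rw [pow_right_comm, neg_one_sq, one_pow]
    linear_combination h - q * ih + (q + 1) * hsq

lemma hermitianPerp_eq_orthogonalBilin {l : ℕ} (U : Submodule K (Fin l → K)) :
    hermitianPerp q U = U.orthogonalBilin (hermitianForm (frobeniusConj hK)) := rfl

lemma hermitianNu_mul_card_units (n : ℕ) :
    hermitianNu q K n (n + 1) * Nat.card Kˣ =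
      Nat.card {v : Fin (n + 1) → K // v ≠ 0 ∧ hermitianForm (frobeniusConj hK) v v = 0} := by
  rw [hermitianNu, ← card_isotropic_lines_mul_card_units]
  simp only [hermitianPerp_eq_orthogonalBilin hK]
  rw [card_coisotropic_eq_card_isotropic (hermitianForm_separatingLeft _)
    (hermitianForm_isSymm _).isRefl (finrank_fin_fun K).symm]

lemma hermitianNu_mul_sq_sub_one (hK : Fintype.card K = q ^ 2) (n : ℕ) :
    (hermitianNu q K n (n + 1) : ℤ) * (q ^ 2 - 1) =
      (q ^ (n + 1) - (-1) ^ (n + 1)) * (q ^ n - (-1) ^ n) := by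
  have hunits : (Nat.card Kˣ : ℤ) = q ^ 2 - 1 := by
    rw [Nat.card_units, Nat.card_eq_fintype_card, Nat.cast_pred Fintype.card_pos, hK, Nat.cast_pow]
  have hiso := card_isotropic hK n
  rw [card_isotropic_eq_card_ne_zero_add_one, ← hermitianNu_mul_card_units hK, Nat.cast_succ,
    Nat.cast_mul, hunits] at hiso
  linear_combination hiso

end FrobeniusConj

theorem hermitianNu_closed_formula_general {q : ℕ} {K : Type*} [Field K] [Fintype K]
    (hK : Fintype.card K = q ^ 2) (n : ℕ) :
    (Odd (n + 1) → hermitianNu q K n (n + 1) =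
        (q ^ (n + 1) + 1) * ∑ j ∈ Finset.range ((n + 1) / 2), q ^ (2 * j)) ∧
    (Even (n + 1) → hermitianNu q K n (n + 1) =
        (q ^ n + 1) * ∑ j ∈ Finset.range ((n + 1) / 2), q ^ (2 * j)) := by
  have hν := hermitianNu_mul_sq_sub_one hK n
  have hq : (q : ℤ) ^ 2 - 1 ≠ 0 := by
    have : (1 : ℤ) < q ^ 2 := mod_cast hK ▸ Fintype.one_lt_card
    omega
  have hgeom (k : ℕ) : (∑ j ∈ Finset.range k, (q : ℤ) ^ (2 * j)) * (q ^ 2 - 1) =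
      q ^ (2 * k) - 1 := by
    simp only [pow_mul]
    exact geom_sum_mul _ k
  refine ⟨fun hodd => ?_, fun heven => ?_⟩ <;> zify <;> apply mul_right_cancel₀ hq
  · have hn : 2 * ((n + 1) / 2) = n := by grind
    rw [mul_assoc, hgeom, hn, hν, hodd.neg_one_pow,
      (Nat.not_odd_iff_even.1 (Nat.odd_add_one.1 hodd)).neg_one_pow, sub_neg_eq_add]
  · rw [mul_assoc, hgeom, Nat.two_mul_div_two_of_even heven, hν, heven.neg_one_pow,
      (Nat.not_even_iff_odd.1 (Nat.even_add_one.1 heven)).neg_one_pow, sub_neg_eq_add, mul_comm]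

/-- Let `p > 2` be a prime and `K` a field with `p^2` elements.  For every `l ≥ 2`,
`ν(l−1, l) = (p^l + 1) · Σ_{l−1}` if `l` is odd and `ν(l−1, l) = (p^{l−1} + 1) · Σ_{l−1}`
if `l` is even, where `Σ_{l−1} = Σ_{j=0}^{⌊(l−2)/2⌋} p^{2j}`. -/
theorem hermitianNu_closed_formula
    (p : ℕ) (hp : p.Prime) (hp2 : 2 < p)
    (K : Type*) [Field K] [Fintype K] (hK : Fintype.card K = p ^ 2)
    (l : ℕ) (hl : 2 ≤ l) :
    (Odd l → hermitianNu p K (l - 1) l =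
        (p ^ l + 1) * ∑ j ∈ Finset.range ((l - 2) / 2 + 1), p ^ (2 * j)) ∧
    (Even l → hermitianNu p K (l - 1) l =
        (p ^ (l - 1) + 1) * ∑ j ∈ Finset.range ((l - 2) / 2 + 1), p ^ (2 * j)) := by
  obtain ⟨n, rfl⟩ := Nat.exists_eq_add_of_le' hl
  simpa [show n + 1 + 1 = n + 2 from rfl] using hermitianNu_closed_formula_general hK (n + 1)
end
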